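/- Let μ be a probability mass function on T₁ := 𝒳 × Multiset(𝒳) with 0 < β := Σ_τ μ(τ)·deg(τ) < ∞, let η₁ be the law on T₁ with degree distribution Q and i.i.d. vertex marks, where Q has finite nonzero mean, assume μ is absolutely continuous with respect to η₁, and assume μ̄^{1,o} is symmetric (μ̄^{1,o}(a,b) = μ̄^{1,o}(b,a) for all a,b ∈ 𝒳). Then, as an identity of elements of [0,∞], H(μ ‖ μ̌) = H(μ ‖ μ̂) + β·H(μ̄^{1,o} ‖ μ̄¹ ⊗ μ̄ᵒ); equivalently, (1/2)·(H(μ ‖ μ̌) + H(μ ‖ μ̂)) = H(μ ‖ μ̂) + (β/2)·H(μ̄^{1,o} ‖ μ̄¹ ⊗ μ̄ᵒ). -/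

import Mathlib

/-!
`μ̌` and `μ̂` are both obtained from `η₁` by giving every neighbor of the root a multiplicative
weight, so `log (μ̂ / μ̌)` at a tree `(x, m)` is the sum over `a ∈ m` of
`log (μ̄^{1|o}(a|x) / μ̄¹(a))`. Averaging a sum over neighbors under `μ` amounts to averaging over
the pair (neighbor mark, root mark) under `β · μ̄^{1,o}`, which turns this sum into `β` times the
mutual information of `μ̄^{1,o}`. That quantity is finite and nonnegative, and `μ̂` has total mass
at most `1`, so adding `μ (log (μ / μ̂) + log (μ̂ / μ̌))` termwise is legitimate in `[0, ∞]`.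
-/

open scoped BigOperators ENNReal Classical

noncomputable section

/-- Depth-1 rooted marked trees without edge marks: the root mark together with the
multiset of vertex marks of the neighbors of the root. -/
abbrev T1 (𝒳 : Type) : Type := 𝒳 × Multiset 𝒳

section Defs

variable {𝒳 : Type} [Fintype 𝒳] [DecidableEq 𝒳]

/-- Degree of the root of a depth-1 tree. -/
def deg (τ : T1 𝒳) : ℕ := Multiset.card τ.2

/-- Multinomial coefficient `card m ! / ∏ₐ (multiplicity of a in m)!`. -/
def ordCoeff (m : Multiset 𝒳) : ℝ :=
  (Nat.factorial (Multiset.card m) : ℝ) /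
    ∏ a ∈ m.toFinset, (Nat.factorial (m.count a) : ℝ)

/-- The law `η₁` on `T1` with root-degree distribution `Q` and i.i.d. vertex marks:
`η₁ (x, m) = ν x · Q (card m) · (card m)!/∏ₐ count a ! · ∏_{a ∈ m} ν a`. -/
def eta1 (ν : 𝒳 → ℝ) (Q : ℕ → ℝ) (τ : T1 𝒳) : ℝ :=
  ν τ.1 * Q (Multiset.card τ.2) * ordCoeff τ.2 * (τ.2.map ν).prod

/-- Mean root degree `β = ∑_τ μ τ · deg τ`. -/
def meanDeg (μ : T1 𝒳 → ℝ) : ℝ := ∑' τ : T1 𝒳, μ τ * (deg τ : ℝ)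

/-- The neighbor–root marginal
`μ̄^{1,o} (a, b) = (1/β) ∑_m μ (b, m) · (multiplicity of a in m)`. -/
def nbrRoot (μ : T1 𝒳 → ℝ) (a b : 𝒳) : ℝ :=
  (1 / meanDeg μ) * ∑' m : Multiset 𝒳, μ (b, m) * (m.count a : ℝ)

/-- First marginal `μ̄¹` of `μ̄^{1,o}`. -/
def marg1 (μ : T1 𝒳 → ℝ) (a : 𝒳) : ℝ := ∑ b : 𝒳, nbrRoot μ a b

/-- Second marginal `μ̄ᵒ` of `μ̄^{1,o}`. -/
def margO (μ : T1 𝒳 → ℝ) (b : 𝒳) : ℝ := ∑ a : 𝒳, nbrRoot μ a b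

/-- Conditional law `μ̄^{1|o} (a | b) = μ̄^{1,o}(a,b)/μ̄ᵒ(b)` (and `0` if `μ̄ᵒ(b) = 0`). -/
def condNbr (μ : T1 𝒳 → ℝ) (a b : 𝒳) : ℝ :=
  if 0 < margO μ b then nbrRoot μ a b / margO μ b else 0

/-- `μ̌ (x, m) = η₁ (x, m) · ∏_{a ∈ m} μ̄¹ a / ν a` (product with multiplicity; a ratio
with zero denominator is `0`); here `η̄₁¹ = ν`. -/
def muCheck (ν : 𝒳 → ℝ) (Q : ℕ → ℝ) (μ : T1 𝒳 → ℝ) (τ : T1 𝒳) : ℝ :=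
  eta1 ν Q τ * (τ.2.map fun a => marg1 μ a / ν a).prod

/-- `μ̂ (x, m) = η₁ (x, m) · ∏_{a ∈ m} μ̄^{1|o}(a|x) / ν a` (product with multiplicity; a
ratio with zero denominator is `0`); here `η̄₁^{1|o}(a|b) = ν a`. -/
def muHat (ν : 𝒳 → ℝ) (Q : ℕ → ℝ) (μ : T1 𝒳 → ℝ) (τ : T1 𝒳) : ℝ :=
  eta1 ν Q τ * (τ.2.map fun a => condNbr μ a τ.1 / ν a).prod

end Defs

/-- Relative entropy `H(p ‖ q) = ∑ₛ p s * log (p s / q s)` of probability mass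
functions, with value `∞` when `p` is not absolutely continuous with respect to `q`
(or the defining series diverges); `0·log 0 = 0` is automatic since `Real.log 0 = 0`. -/
def relEnt {S : Type*} (p q : S → ℝ) : ℝ≥0∞ :=
  if (∀ s, q s = 0 → p s = 0) ∧ Summable (fun s => p s * Real.log (p s / q s)) then
    ENNReal.ofReal (∑' s, p s * Real.log (p s / q s))
  else ⊤

section RelativeEntropy

lemma sub_le_mul_log_div {x y : ℝ} (hx : 0 ≤ x) (hy : 0 ≤ y) (hxy : y = 0 → x = 0) :
    x - y ≤ x * Real.log (x / y) := by
  rcases hy.eq_or_lt with rfl | hy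
  · simp [hxy rfl]
  · calc x - y = y * (x / y - 1) := by field_simp
      _ ≤ y * (x / y * Real.log (x / y)) := by
          gcongr
          exact Real.self_sub_one_le_mul_log (by positivity)
      _ = x * Real.log (x / y) := by field_simp

variable {S : Type*} {p q r : S → ℝ} {a b c : ℝ}

lemma nonneg_of_hasSum_mul_log_div (hp0 : ∀ s, 0 ≤ p s) (hq0 : ∀ s, 0 ≤ q s)
    (hpq : ∀ s, q s = 0 → p s = 0) (hp : HasSum p a) (hq : HasSum q b) (hba : b ≤ a)
    (hc : HasSum (fun s => p s * Real.log (p s / q s)) c) : 0 ≤ c :=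
  (sub_nonneg.2 hba).trans <|
    hasSum_le (fun s => sub_le_mul_log_div (hp0 s) (hq0 s) (hpq s)) (hp.sub hq) hc

lemma relEnt_eq_ofReal_of_hasSum (hpq : ∀ s, q s = 0 → p s = 0)
    (hc : HasSum (fun s => p s * Real.log (p s / q s)) c) : relEnt p q = ENNReal.ofReal c := by
  rw [relEnt, if_pos ⟨hpq, hc.summable⟩, hc.tsum_eq]

lemma relEnt_eq_top_of_not_summable
    (h : ¬Summable fun s => p s * Real.log (p s / q s)) : relEnt p q = ⊤ :=
  if_neg fun h' => h h'.2

lemma relEnt_eq_top_of_not_absolutelyContinuous (h : ¬∀ s, q s = 0 → p s = 0) :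
    relEnt p q = ⊤ :=
  if_neg fun h' => h h'.1

theorem relEnt_eq_relEnt_add_ofReal (hp0 : ∀ s, 0 ≤ p s) (hr0 : ∀ s, 0 ≤ r s)
    (hpq : ∀ s, q s = 0 → p s = 0) (hpr : ∀ s, r s = 0 → p s = 0)
    (hp : HasSum p a) (hr : HasSum r b) (hba : b ≤ a)
    (hc : HasSum (fun s => p s * Real.log (r s / q s)) c) (hc0 : 0 ≤ c) :
    relEnt p q = relEnt p r + ENNReal.ofReal c := by
  have hsplit (s : S) : p s * Real.log (p s / q s) =
      p s * Real.log (p s / r s) + p s * Real.log (r s / q s) := by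
    by_cases hps : p s = 0
    · simp [hps]
    · have hqs : q s ≠ 0 := mt (hpq s) hps
      have hrs : r s ≠ 0 := mt (hpr s) hps
      rw [← mul_add, ← Real.log_mul (div_ne_zero hps hrs) (div_ne_zero hrs hqs),
        div_mul_div_cancel₀ hrs]
  by_cases hs : Summable fun s => p s * Real.log (p s / r s)
  · have hsum := hs.hasSum.add hc
    simp only [← hsplit] at hsum
    rw [relEnt_eq_ofReal_of_hasSum hpq hsum, relEnt_eq_ofReal_of_hasSum hpr hs.hasSum,
      ENNReal.ofReal_add (nonneg_of_hasSum_mul_log_div hp0 hr0 hpr hp hr hba hs.hasSum) hc0]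
  · have hs' : ¬Summable fun s => p s * Real.log (p s / q s) := fun h =>
      hs (by simpa only [hsplit, add_sub_cancel_right] using h.sub hc.summable)
    rw [relEnt_eq_top_of_not_summable hs, relEnt_eq_top_of_not_summable hs', top_add]

end RelativeEntropy

section Sums

lemma hasSum_prod_of_fintype {α β M : Type*} [Fintype α] [AddCommMonoid M] [TopologicalSpace M]
    [ContinuousAdd M] {f : α × β → M} {c : α → M} (h : ∀ a, HasSum (fun b => f (a, b)) (c a)) :
    HasSum f (∑ a, c a) := by
  have hfiber (a : α) : HasSum (fun p : α × β => if p.1 = a then f p else 0) (c a) := by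
    refine ((Prod.mk_right_injective a).hasSum_iff fun p hp => if_neg ?_).1
      (by simpa [Function.comp_def] using h a)
    rintro rfl
    exact hp ⟨p.2, rfl⟩
  simpa using hasSum_sum fun a (_ : a ∈ Finset.univ) => hfiber a

lemma sum_map_eq_sum_count_mul {α R : Type*} [Fintype α] [DecidableEq α]
    [NonAssocSemiring R] (m : Multiset α) (f : α → R) :
    (m.map f).sum = ∑ a, (m.count a : R) * f a := by
  simp only [Finset.sum_multiset_map_count, nsmul_eq_mul]
  refine Finset.sum_subset (Finset.subset_univ _) fun a _ ha => ?_
  simp [Multiset.count_eq_zero_of_notMem (mt Multiset.mem_toFinset.2 ha)]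

lemma log_prod_map_div_prod_map {α : Type*} {m : Multiset α} {f g : α → ℝ}
    (hf : ∀ a ∈ m, f a ≠ 0) (hg : ∀ a ∈ m, g a ≠ 0) :
    Real.log ((m.map f).prod / (m.map g).prod) = (m.map fun a => Real.log (f a / g a)).sum := by
  rw [← Multiset.prod_map_div, Real.log_multiset_prod, Multiset.map_map]
  · rfl
  · simpa using fun a ha => ⟨hf a ha, hg a ha⟩

lemma add_div_two_eq_add_ofReal_half_mul {h k c : ℝ≥0∞} {β : ℝ}
    (hk : k = h + ENNReal.ofReal β * c) :
    (k + h) / 2 = h + ENNReal.ofReal (β / 2) * c := by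
  rw [hk, add_right_comm, ENNReal.add_div, ENNReal.add_div, ENNReal.add_halves,
    ENNReal.ofReal_div_of_pos two_pos, ENNReal.ofReal_ofNat, div_eq_mul_inv, div_eq_mul_inv,
    mul_right_comm]

end Sums

section MarkedTrees

variable {𝒳 : Type} [DecidableEq 𝒳]

lemma ordCoeff_nonneg (m : Multiset 𝒳) : 0 ≤ ordCoeff m := by
  unfold ordCoeff
  positivity

lemma ordCoeff_eq_countPerms (m : Multiset 𝒳) : ordCoeff m = m.countPerms := by
  have hspec : (∏ a ∈ m.toFinset, (m.count a).factorial) * m.countPerms = m.card.factorial := by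
    rw [← Multiset.toFinset_sum_count_eq]
    exact Nat.multinomial_spec m.toFinset (m.count ·)
  rw [ordCoeff, ← hspec]
  push_cast
  exact mul_div_cancel_left₀ _ (by positivity)

variable {ν : 𝒳 → ℝ} {Q : ℕ → ℝ}

lemma eta1_nonneg (hν : ∀ x, 0 ≤ ν x) (hQ : ∀ n, 0 ≤ Q n) (τ : T1 𝒳) : 0 ≤ eta1 ν Q τ :=
  mul_nonneg (mul_nonneg (mul_nonneg (hν _) (hQ _)) (ordCoeff_nonneg _))
    (Multiset.prod_nonneg (by simpa using fun a _ => hν a))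

lemma ne_zero_of_mem_of_eta1_ne_zero {x a : 𝒳} {m : Multiset 𝒳} (h : eta1 ν Q (x, m) ≠ 0)
    (ha : a ∈ m) : ν a ≠ 0 := fun h0 =>
  right_ne_zero_of_mul h (Multiset.prod_eq_zero (h0 ▸ Multiset.mem_map_of_mem ν ha))

variable [Fintype 𝒳]

lemma sum_sym_ordCoeff_mul_prod_map (w : 𝒳 → ℝ) (n : ℕ) :
    ∑ m : Sym 𝒳 n, ordCoeff (m : Multiset 𝒳) * ((m : Multiset 𝒳).map w).prod =
      (∑ a, w a) ^ n := by
  simp only [ordCoeff_eq_countPerms, Finset.sum_pow, Finset.sym_univ]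
  rfl

lemma hasSum_card_mul_ordCoeff_mul_prod_map {w : 𝒳 → ℝ} (hw : ∀ a, 0 ≤ w a)
    (hQ : ∀ n, 0 ≤ Q n) (hs : Summable fun n => Q n * (∑ a, w a) ^ n) :
    HasSum (fun m : Multiset 𝒳 => Q m.card * ordCoeff m * (m.map w).prod)
      (∑' n, Q n * (∑ a, w a) ^ n) := by
  let e : (Σ n, Sym 𝒳 n) ≃ Multiset 𝒳 := Equiv.sigmaFiberEquiv Multiset.card
  let f : Multiset 𝒳 → ℝ := fun m => Q m.card * ordCoeff m * (m.map w).prod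
  have hf0 (m : Multiset 𝒳) : 0 ≤ f m :=
    mul_nonneg (mul_nonneg (hQ _) (ordCoeff_nonneg m))
      (Multiset.prod_nonneg (by simpa using fun a _ => hw a))
  have hfiber (n : ℕ) : HasSum (fun m : Sym 𝒳 n => f (e ⟨n, m⟩)) (Q n * (∑ a, w a) ^ n) := by
    have hcard (m : Sym 𝒳 n) :
        f (e ⟨n, m⟩) = Q n * (ordCoeff (m : Multiset 𝒳) * ((m : Multiset 𝒳).map w).prod) := by
      change Q (m : Multiset 𝒳).card * ordCoeff (m : Multiset 𝒳) * _ = _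
      rw [Sym.card_coe, mul_assoc]
      rfl
    simpa only [hcard, ← Finset.mul_sum, sum_sym_ordCoeff_mul_prod_map] using
      hasSum_fintype fun m : Sym 𝒳 n => f (e ⟨n, m⟩)
  have hsum : Summable (f ∘ e) :=
    (summable_sigma_of_nonneg fun _ => hf0 _).2
      ⟨fun n => (hfiber n).summable, by simpa only [Function.comp_apply, (hfiber _).tsum_eq]⟩
  exact e.hasSum_iff.1 (HasSum.sigma_of_hasSum hs.hasSum hfiber hsum)

variable {w : 𝒳 → 𝒳 → ℝ}

lemma hasSum_eta1_mul_prod_map (hν : ∀ x, 0 ≤ ν x) (hQ : ∀ n, 0 ≤ Q n)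
    (hw : ∀ a x, 0 ≤ w a x)
    (hs : ∀ x, Summable fun n => Q n * (∑ a, ν a * w a x) ^ n) :
    HasSum (fun τ : T1 𝒳 => eta1 ν Q τ * (τ.2.map fun a => w a τ.1).prod)
      (∑ x, ν x * ∑' n, Q n * (∑ a, ν a * w a x) ^ n) := by
  refine hasSum_prod_of_fintype fun x => ?_
  have hfactor (m : Multiset 𝒳) : eta1 ν Q (x, m) * (m.map fun a => w a x).prod =
      ν x * (Q m.card * ordCoeff m * (m.map fun a => ν a * w a x).prod) := by
    rw [eta1, Multiset.prod_map_mul]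
    ring
  simp only [hfactor]
  exact (hasSum_card_mul_ordCoeff_mul_prod_map
    (fun a => mul_nonneg (hν a) (hw a x)) hQ (hs x)).mul_left (ν x)

theorem exists_hasSum_eta1_mul_prod_map_le (hν : ∀ x, 0 ≤ ν x) (hQ : ∀ n, 0 ≤ Q n) {c : ℝ}
    (hQc : HasSum Q c) (hw : ∀ a x, 0 ≤ w a x) (hw1 : ∀ x, ∑ a, ν a * w a x ≤ 1) :
    ∃ b ≤ (∑ x, ν x) * c,
      HasSum (fun τ : T1 𝒳 => eta1 ν Q τ * (τ.2.map fun a => w a τ.1).prod) b := by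
  have hw0 (x : 𝒳) : 0 ≤ ∑ a, ν a * w a x :=
    Finset.sum_nonneg fun a _ => mul_nonneg (hν a) (hw a x)
  have hle (x : 𝒳) (n : ℕ) : Q n * (∑ a, ν a * w a x) ^ n ≤ Q n :=
    mul_le_of_le_one_right (hQ n) (pow_le_one₀ (hw0 x) (hw1 x))
  have hs (x : 𝒳) : Summable fun n => Q n * (∑ a, ν a * w a x) ^ n :=
    .of_nonneg_of_le (fun n => mul_nonneg (hQ n) (pow_nonneg (hw0 x) n)) (hle x) hQc.summable
  refine ⟨_, ?_, hasSum_eta1_mul_prod_map hν hQ hw hs⟩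
  rw [Finset.sum_mul]
  gcongr with x
  · exact hν x
  · exact hasSum_le (hle x) (hs x).hasSum hQc

end MarkedTrees

section NeighborRoot

variable {𝒳 : Type} [DecidableEq 𝒳] {μ : T1 𝒳 → ℝ}

lemma nbrRoot_nonneg (hμ : ∀ τ, 0 ≤ μ τ) (a b : 𝒳) : 0 ≤ nbrRoot μ a b :=
  mul_nonneg (one_div_nonneg.2 (tsum_nonneg fun _ => mul_nonneg (hμ _) (Nat.cast_nonneg _)))
    (tsum_nonneg fun _ => mul_nonneg (hμ _) (Nat.cast_nonneg _))

lemma hasSum_mul_count (hdeg : Summable fun τ : T1 𝒳 => μ τ * (deg τ : ℝ))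
    (hβ : meanDeg μ ≠ 0) (a b : 𝒳) :
    HasSum (fun m : Multiset 𝒳 => μ (b, m) * (m.count a : ℝ)) (meanDeg μ * nbrRoot μ a b) := by
  have hs : Summable fun m : Multiset 𝒳 => μ (b, m) * (m.count a : ℝ) := by
    refine .of_norm_bounded (hdeg.prod_factor b).norm fun m => ?_
    simp only [norm_mul, RCLike.norm_natCast]
    gcongr
    exact Multiset.count_le_card a m
  rw [nbrRoot, ← mul_assoc, mul_one_div_cancel hβ, one_mul]
  exact hs.hasSum

lemma nbrRoot_pos_of_mem (hμ : ∀ τ, 0 ≤ μ τ)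
    (hdeg : Summable fun τ : T1 𝒳 => μ τ * (deg τ : ℝ)) (hβ : meanDeg μ ≠ 0) {a x : 𝒳}
    {m : Multiset 𝒳} (hxm : μ (x, m) ≠ 0) (ha : a ∈ m) : 0 < nbrRoot μ a x := by
  have hterm : 0 < μ (x, m) * (m.count a : ℝ) :=
    mul_pos ((hμ _).lt_of_ne' hxm) (Nat.cast_pos.2 (Multiset.count_pos.2 ha))
  have hsum := hasSum_mul_count hdeg hβ a x
  have hprod : 0 < meanDeg μ * nbrRoot μ a x := by
    rw [← hsum.tsum_eq]
    exact hsum.summable.tsum_pos (fun _ => mul_nonneg (hμ _) (Nat.cast_nonneg _)) m hterm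
  exact (nbrRoot_nonneg hμ a x).lt_of_ne' (right_ne_zero_of_mul hprod.ne')

variable [Fintype 𝒳]

theorem hasSum_mul_sum_map (hdeg : Summable fun τ : T1 𝒳 => μ τ * (deg τ : ℝ))
    (hβ : meanDeg μ ≠ 0) (f : 𝒳 → 𝒳 → ℝ) :
    HasSum (fun τ : T1 𝒳 => μ τ * (τ.2.map fun a => f a τ.1).sum)
      (meanDeg μ * ∑ p : 𝒳 × 𝒳, nbrRoot μ p.1 p.2 * f p.1 p.2) := by
  rw [Fintype.sum_prod_type_right, Finset.mul_sum]
  refine hasSum_prod_of_fintype fun x => ?_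
  simp only [sum_map_eq_sum_count_mul, Finset.mul_sum, ← mul_assoc]
  exact hasSum_sum fun a _ => (hasSum_mul_count hdeg hβ a x).mul_right (f a x)

lemma sum_nbrRoot (hdeg : Summable fun τ : T1 𝒳 => μ τ * (deg τ : ℝ))
    (hβ : meanDeg μ ≠ 0) : ∑ p : 𝒳 × 𝒳, nbrRoot μ p.1 p.2 = 1 := by
  have hsum := hasSum_mul_sum_map hdeg hβ fun _ _ => 1
  simp only [Multiset.map_const', Multiset.sum_replicate, nsmul_one, mul_one] at hsum
  exact mul_left_cancel₀ hβ ((hsum.unique hdeg.hasSum).trans (mul_one _).symm)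

lemma sum_marg1_mul_margO (μ : T1 𝒳 → ℝ) :
    ∑ p : 𝒳 × 𝒳, marg1 μ p.1 * margO μ p.2 = (∑ p : 𝒳 × 𝒳, nbrRoot μ p.1 p.2) ^ 2 := by
  rw [Fintype.sum_prod_type, ← Finset.sum_mul_sum, sq]
  congr 1
  · exact (Fintype.sum_prod_type fun p : 𝒳 × 𝒳 => nbrRoot μ p.1 p.2).symm
  · exact (Fintype.sum_prod_type_right fun p : 𝒳 × 𝒳 => nbrRoot μ p.1 p.2).symm

lemma nbrRoot_le_marg1 (hμ : ∀ τ, 0 ≤ μ τ) (a b : 𝒳) : nbrRoot μ a b ≤ marg1 μ a :=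
  Finset.single_le_sum (fun c _ => nbrRoot_nonneg hμ a c) (Finset.mem_univ b)

lemma nbrRoot_le_margO (hμ : ∀ τ, 0 ≤ μ τ) (a b : 𝒳) : nbrRoot μ a b ≤ margO μ b :=
  Finset.single_le_sum (f := (nbrRoot μ · b)) (fun c _ => nbrRoot_nonneg hμ c b)
    (Finset.mem_univ a)

lemma margO_nonneg (hμ : ∀ τ, 0 ≤ μ τ) (b : 𝒳) : 0 ≤ margO μ b :=
  Finset.sum_nonneg fun a _ => nbrRoot_nonneg hμ a b

lemma marg1_nonneg (hμ : ∀ τ, 0 ≤ μ τ) (a : 𝒳) : 0 ≤ marg1 μ a :=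
  Finset.sum_nonneg fun b _ => nbrRoot_nonneg hμ a b

lemma condNbr_eq_div (hμ : ∀ τ, 0 ≤ μ τ) (a b : 𝒳) :
    condNbr μ a b = nbrRoot μ a b / margO μ b := by
  refine ite_eq_left_iff.2 fun h => ?_
  rw [(not_lt.1 h).antisymm (margO_nonneg hμ b), div_zero]

lemma condNbr_nonneg (hμ : ∀ τ, 0 ≤ μ τ) (a b : 𝒳) : 0 ≤ condNbr μ a b := by
  rw [condNbr_eq_div hμ]
  exact div_nonneg (nbrRoot_nonneg hμ a b) (margO_nonneg hμ b)

lemma sum_condNbr_le_one (hμ : ∀ τ, 0 ≤ μ τ) (b : 𝒳) : ∑ a, condNbr μ a b ≤ 1 := by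
  simp only [condNbr_eq_div hμ, ← Finset.sum_div]
  exact div_self_le_one _

/-- The mutual information `H(μ̄^{1,o} ‖ μ̄¹ ⊗ μ̄ᵒ)` between the mark of a neighbor and the mark of
the root, as a real number: over a finite mark space it is never infinite. -/
def edgeMutualInfo (μ : T1 𝒳 → ℝ) : ℝ :=
  ∑ p : 𝒳 × 𝒳,
    nbrRoot μ p.1 p.2 * Real.log (nbrRoot μ p.1 p.2 / (marg1 μ p.1 * margO μ p.2))

lemma nbrRoot_eq_zero_of_marg1_mul_margO_eq_zero (hμ : ∀ τ, 0 ≤ μ τ) {a b : 𝒳}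
    (h : marg1 μ a * margO μ b = 0) : nbrRoot μ a b = 0 := by
  refine le_antisymm ?_ (nbrRoot_nonneg hμ a b)
  rcases mul_eq_zero.1 h with h | h
  · exact h ▸ nbrRoot_le_marg1 hμ a b
  · exact h ▸ nbrRoot_le_margO hμ a b

lemma relEnt_nbrRoot_eq_ofReal_edgeMutualInfo (hμ : ∀ τ, 0 ≤ μ τ) :
    relEnt (fun p : 𝒳 × 𝒳 => nbrRoot μ p.1 p.2) (fun p => marg1 μ p.1 * margO μ p.2) =
      ENNReal.ofReal (edgeMutualInfo μ) :=
  relEnt_eq_ofReal_of_hasSum (fun _ => nbrRoot_eq_zero_of_marg1_mul_margO_eq_zero hμ)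
    (hasSum_fintype _)

lemma edgeMutualInfo_nonneg (hμ : ∀ τ, 0 ≤ μ τ)
    (hdeg : Summable fun τ : T1 𝒳 => μ τ * (deg τ : ℝ)) (hβ : meanDeg μ ≠ 0) :
    0 ≤ edgeMutualInfo μ :=
  nonneg_of_hasSum_mul_log_div (fun p : 𝒳 × 𝒳 => nbrRoot_nonneg hμ p.1 p.2)
    (fun p => mul_nonneg (marg1_nonneg hμ p.1) (margO_nonneg hμ p.2))
    (fun _ => nbrRoot_eq_zero_of_marg1_mul_margO_eq_zero hμ)
    (hasSum_fintype _) (hasSum_fintype _)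
    (by rw [sum_marg1_mul_margO, sum_nbrRoot hdeg hβ, one_pow]) (hasSum_fintype _)

lemma marg1_ne_zero_of_mem (hμ : ∀ τ, 0 ≤ μ τ)
    (hdeg : Summable fun τ : T1 𝒳 => μ τ * (deg τ : ℝ)) (hβ : meanDeg μ ≠ 0) {a x : 𝒳}
    {m : Multiset 𝒳} (hxm : μ (x, m) ≠ 0) (ha : a ∈ m) : marg1 μ a ≠ 0 :=
  ((nbrRoot_pos_of_mem hμ hdeg hβ hxm ha).trans_le (nbrRoot_le_marg1 hμ a x)).ne'

lemma condNbr_ne_zero_of_mem (hμ : ∀ τ, 0 ≤ μ τ)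
    (hdeg : Summable fun τ : T1 𝒳 => μ τ * (deg τ : ℝ)) (hβ : meanDeg μ ≠ 0) {a x : 𝒳}
    {m : Multiset 𝒳} (hxm : μ (x, m) ≠ 0) (ha : a ∈ m) : condNbr μ a x ≠ 0 := by
  have hpos := nbrRoot_pos_of_mem hμ hdeg hβ hxm ha
  rw [condNbr_eq_div hμ]
  exact div_ne_zero hpos.ne' (hpos.trans_le (nbrRoot_le_margO hμ a x)).ne'

end NeighborRoot

section TiltedLaws

variable {𝒳 : Type} [Fintype 𝒳] [DecidableEq 𝒳] {ν : 𝒳 → ℝ} {Q : ℕ → ℝ} {μ : T1 𝒳 → ℝ}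

lemma muHat_nonneg (hν : ∀ x, 0 ≤ ν x) (hQ : ∀ n, 0 ≤ Q n) (hμ : ∀ τ, 0 ≤ μ τ) (τ : T1 𝒳) :
    0 ≤ muHat ν Q μ τ :=
  mul_nonneg (eta1_nonneg hν hQ τ) <|
    Multiset.prod_nonneg (by simpa using fun a _ => div_nonneg (condNbr_nonneg hμ a τ.1) (hν a))

lemma exists_hasSum_muHat_le (hν : ∀ x, 0 ≤ ν x) (hQ : ∀ n, 0 ≤ Q n) {c : ℝ} (hQc : HasSum Q c)
    (hμ : ∀ τ, 0 ≤ μ τ) : ∃ b ≤ (∑ x, ν x) * c, HasSum (muHat ν Q μ) b := by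
  refine exists_hasSum_eta1_mul_prod_map_le (w := fun a x => condNbr μ a x / ν a) hν hQ hQc
    (fun a x => div_nonneg (condNbr_nonneg hμ a x) (hν a)) fun x => ?_
  refine (Finset.sum_le_sum fun a _ => ?_).trans (sum_condNbr_le_one hμ x)
  by_cases h : ν a = 0
  · simpa [h] using condNbr_nonneg hμ a x
  · exact (mul_div_cancel₀ _ h).le

lemma eq_zero_of_muHat_eq_zero (hμ : ∀ τ, 0 ≤ μ τ)
    (hdeg : Summable fun τ : T1 𝒳 => μ τ * (deg τ : ℝ)) (hβ : meanDeg μ ≠ 0)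
    (hμη : ∀ τ, eta1 ν Q τ = 0 → μ τ = 0) (τ : T1 𝒳) (h : muHat ν Q μ τ = 0) : μ τ = 0 := by
  contrapose! h
  have hη := mt (hμη τ) h
  refine mul_ne_zero hη (Multiset.prod_ne_zero ?_)
  simpa using fun a ha => ⟨condNbr_ne_zero_of_mem hμ hdeg hβ h ha,
    ne_zero_of_mem_of_eta1_ne_zero hη ha⟩

lemma eq_zero_of_muCheck_eq_zero (hμ : ∀ τ, 0 ≤ μ τ)
    (hdeg : Summable fun τ : T1 𝒳 => μ τ * (deg τ : ℝ)) (hβ : meanDeg μ ≠ 0)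
    (hμη : ∀ τ, eta1 ν Q τ = 0 → μ τ = 0) (τ : T1 𝒳) (h : muCheck ν Q μ τ = 0) : μ τ = 0 := by
  contrapose! h
  have hη := mt (hμη τ) h
  refine mul_ne_zero hη (Multiset.prod_ne_zero ?_)
  simpa using fun a ha => ⟨marg1_ne_zero_of_mem hμ hdeg hβ h ha,
    ne_zero_of_mem_of_eta1_ne_zero hη ha⟩

lemma log_muHat_div_muCheck (hμ : ∀ τ, 0 ≤ μ τ)
    (hdeg : Summable fun τ : T1 𝒳 => μ τ * (deg τ : ℝ)) (hβ : meanDeg μ ≠ 0) {τ : T1 𝒳}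
    (hμτ : μ τ ≠ 0) (hη : eta1 ν Q τ ≠ 0) :
    Real.log (muHat ν Q μ τ / muCheck ν Q μ τ) =
      (τ.2.map fun a => Real.log (condNbr μ a τ.1 / marg1 μ a)).sum := by
  have hν (a : 𝒳) (ha : a ∈ τ.2) : ν a ≠ 0 := ne_zero_of_mem_of_eta1_ne_zero hη ha
  rw [muHat, muCheck, mul_div_mul_left _ _ hη, log_prod_map_div_prod_map
    (fun a ha => div_ne_zero (condNbr_ne_zero_of_mem hμ hdeg hβ hμτ ha) (hν a ha))
    (fun a ha => div_ne_zero (marg1_ne_zero_of_mem hμ hdeg hβ hμτ ha) (hν a ha))]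
  refine congrArg Multiset.sum (Multiset.map_congr rfl fun a ha => ?_)
  rw [div_div_div_cancel_right₀ (hν a ha)]

lemma hasSum_mul_log_muHat_div_muCheck (hμ : ∀ τ, 0 ≤ μ τ)
    (hdeg : Summable fun τ : T1 𝒳 => μ τ * (deg τ : ℝ)) (hβ : meanDeg μ ≠ 0)
    (hμη : ∀ τ, eta1 ν Q τ = 0 → μ τ = 0) :
    HasSum (fun τ => μ τ * Real.log (muHat ν Q μ τ / muCheck ν Q μ τ))
      (meanDeg μ * edgeMutualInfo μ) := by
  convert hasSum_mul_sum_map hdeg hβ fun a x => Real.log (condNbr μ a x / marg1 μ a)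
    using 2 with τ
  · by_cases hμτ : μ τ = 0
    · simp [hμτ]
    · rw [log_muHat_div_muCheck hμ hdeg hβ hμτ (mt (hμη τ) hμτ)]
  · simp only [edgeMutualInfo, condNbr_eq_div hμ, div_div, mul_comm (marg1 μ _)]

theorem relEnt_muCheck_eq_add (hν : ∀ x, 0 ≤ ν x) (hν1 : ∑ x, ν x = 1) (hQ : ∀ n, 0 ≤ Q n)
    (hQ1 : HasSum Q 1) (hμ : ∀ τ, 0 ≤ μ τ) (hμ1 : HasSum μ 1)
    (hdeg : Summable fun τ : T1 𝒳 => μ τ * (deg τ : ℝ)) (hβ : 0 < meanDeg μ) :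
    relEnt μ (muCheck ν Q μ) = relEnt μ (muHat ν Q μ) +
      ENNReal.ofReal (meanDeg μ) * ENNReal.ofReal (edgeMutualInfo μ) := by
  by_cases hμη : ∀ τ, eta1 ν Q τ = 0 → μ τ = 0
  · obtain ⟨b, hb, hhat⟩ := exists_hasSum_muHat_le hν hQ hQ1 hμ
    rw [hν1, one_mul] at hb
    rw [← ENNReal.ofReal_mul hβ.le]
    exact relEnt_eq_relEnt_add_ofReal hμ (muHat_nonneg hν hQ hμ)
      (eq_zero_of_muCheck_eq_zero hμ hdeg hβ.ne' hμη)
      (eq_zero_of_muHat_eq_zero hμ hdeg hβ.ne' hμη) hμ1 hhat hb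
      (hasSum_mul_log_muHat_div_muCheck hμ hdeg hβ.ne' hμη)
      (mul_nonneg hβ.le (edgeMutualInfo_nonneg hμ hdeg hβ.ne'))
  · have hcheck : ¬∀ τ, muCheck ν Q μ τ = 0 → μ τ = 0 :=
      mt (fun h τ hη => h τ (mul_eq_zero_of_left hη _)) hμη
    have hhat : ¬∀ τ, muHat ν Q μ τ = 0 → μ τ = 0 :=
      mt (fun h τ hη => h τ (mul_eq_zero_of_left hη _)) hμη
    rw [relEnt_eq_top_of_not_absolutelyContinuous hcheck,
      relEnt_eq_top_of_not_absolutelyContinuous hhat, top_add]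

end TiltedLaws

theorem rate_function_vertex_marks_only_general
    {𝒳 : Type} [Fintype 𝒳] [DecidableEq 𝒳]
    (ν : 𝒳 → ℝ) (hν0 : ∀ x, 0 ≤ ν x) (hν1 : ∑ x, ν x = 1)
    (Q : ℕ → ℝ) (hQ0 : ∀ k, 0 ≤ Q k) (hQ1 : HasSum Q 1)
    (μ : T1 𝒳 → ℝ) (hμ0 : ∀ τ, 0 ≤ μ τ) (hμ1 : HasSum μ 1)
    (hβfin : Summable fun τ : T1 𝒳 => μ τ * (deg τ : ℝ))
    (hβpos : 0 < meanDeg μ) :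
    relEnt μ (muCheck ν Q μ) =
        relEnt μ (muHat ν Q μ) +
          ENNReal.ofReal (meanDeg μ) *
            relEnt (fun p : 𝒳 × 𝒳 => nbrRoot μ p.1 p.2)
              (fun p : 𝒳 × 𝒳 => marg1 μ p.1 * margO μ p.2) ∧
      (relEnt μ (muCheck ν Q μ) + relEnt μ (muHat ν Q μ)) / 2 =
        relEnt μ (muHat ν Q μ) +
          ENNReal.ofReal (meanDeg μ / 2) *
            relEnt (fun p : 𝒳 × 𝒳 => nbrRoot μ p.1 p.2)
              (fun p : 𝒳 × 𝒳 => marg1 μ p.1 * margO μ p.2) := by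
  have hinfo := relEnt_nbrRoot_eq_ofReal_edgeMutualInfo hμ0
  have hsplit := relEnt_muCheck_eq_add hν0 hν1 hQ0 hQ1 hμ0 hμ1 hβfin hβpos
  rw [← hinfo] at hsplit
  exact ⟨hsplit, add_div_two_eq_add_ofReal_half_mul hsplit⟩

/-- **Alternative representation without edge marks (Corollary `cor-kapparf`).**
If `μ` is a pmf on `T1 = 𝒳 × Multiset 𝒳` with mean degree `β ∈ (0, ∞)`, `η₁` is the
law with degree distribution `Q` and i.i.d. vertex marks, `μ ≪ η₁`, and `μ̄^{1,o}` is
symmetric, then, as identities in `[0, ∞]`,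
`H(μ ‖ μ̌) = H(μ ‖ μ̂) + β·H(μ̄^{1,o} ‖ μ̄¹ ⊗ μ̄ᵒ)`, equivalently
`(1/2)(H(μ ‖ μ̌) + H(μ ‖ μ̂)) = H(μ ‖ μ̂) + (β/2)·H(μ̄^{1,o} ‖ μ̄¹ ⊗ μ̄ᵒ)`. -/
theorem rate_function_vertex_marks_only
    {𝒳 : Type} [Fintype 𝒳] [DecidableEq 𝒳]
    (ν : 𝒳 → ℝ) (hν0 : ∀ x, 0 ≤ ν x) (hν1 : ∑ x, ν x = 1)
    (Q : ℕ → ℝ) (hQ0 : ∀ k, 0 ≤ Q k) (hQ1 : HasSum Q 1)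
    (hQm : Summable fun k : ℕ => (k : ℝ) * Q k)
    (hQpos : 0 < ∑' k : ℕ, (k : ℝ) * Q k)
    (μ : T1 𝒳 → ℝ) (hμ0 : ∀ τ, 0 ≤ μ τ) (hμ1 : HasSum μ 1)
    (hβfin : Summable fun τ : T1 𝒳 => μ τ * (deg τ : ℝ))
    (hβpos : 0 < meanDeg μ)
    (habs : ∀ τ, eta1 ν Q τ = 0 → μ τ = 0)
    (hsym : ∀ a b : 𝒳, nbrRoot μ a b = nbrRoot μ b a) :
    relEnt μ (muCheck ν Q μ) =
        relEnt μ (muHat ν Q μ) +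
          ENNReal.ofReal (meanDeg μ) *
            relEnt (fun p : 𝒳 × 𝒳 => nbrRoot μ p.1 p.2)
              (fun p : 𝒳 × 𝒳 => marg1 μ p.1 * margO μ p.2) ∧
      (relEnt μ (muCheck ν Q μ) + relEnt μ (muHat ν Q μ)) / 2 =
        relEnt μ (muHat ν Q μ) +
          ENNReal.ofReal (meanDeg μ / 2) *
            relEnt (fun p : 𝒳 × 𝒳 => nbrRoot μ p.1 p.2)
              (fun p : 𝒳 × 𝒳 => marg1 μ p.1 * margO μ p.2) :=
  rate_function_vertex_marks_only_general ν hν0 hν1 Q hQ0 hQ1 μ hμ0 hμ1 hβfin hβpos
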